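/- arXiv:1902.09128 — 2 statements merged into one kernel-verified Lean document; each statement's English description precedes it below -/
import Mathlib

section
/- (Theorem 1, inner worst-case expectation) Let v ∈ ℝⁿ, t ∈ ℝ, ε ≥ 0 and let ξ̂¹,…,ξ̂ᴺ ∈ ℝⁿ (N ≥ 1) with empirical distribution F_N. Then the supremum of ∫ h(v,t,ξ) dμ(ξ) over all Borel probability measures μ on ℝⁿ with finite first moment satisfying d_W(F_N, μ) ≤ ε equals the optimal value of the linear program minimizing (1/N)·Σ_{i=1}^N s_i + λ·ε over (s,λ) ∈ ℝᴺ × ℝ subject to ⟨v,ξ̂ⁱ⟩ − t ≤ s_i, s_i ≥ 0 for all i, and ‖v‖_q ≤ λ; that is, it equals (1/N)·Σ_{i=1}^N max(⟨v,ξ̂ⁱ⟩ − t, 0) + ε·‖v‖_q. -/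
open MeasureTheory Filter Topology
open scoped ENNReal BigOperators

/-- The ℓp norm on ℝⁿ, for `p ∈ [1,∞]` (an extended nonnegative real). -/
noncomputable def lpNorm {n : ℕ} (p : ℝ≥0∞) (x : Fin n → ℝ) : ℝ :=
  if p = ∞ then ⨆ i, |x i| else (∑ i, |x i| ^ p.toReal) ^ (1 / p.toReal)

/-- The Euclidean inner product on ℝⁿ. -/
def ip {n : ℕ} (w x : Fin n → ℝ) : ℝ := ∑ i, w i * x i


/-- `h(v,t,ξ) = max(⟨ξ,v⟩ − t, 0)`. -/
noncomputable def hfun {n : ℕ} (v : Fin n → ℝ) (t : ℝ) (ξ : Fin n → ℝ) : ℝ :=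
  max (ip ξ v - t) 0

/-- The empirical distribution `(1/N)·Σᵢ δ_{ξⁱ}` of `N` samples. -/
noncomputable def empirical {n : ℕ} (N : ℕ) (ξ : Fin N → Fin n → ℝ) :
    MeasureTheory.Measure (Fin n → ℝ) :=
  (N : ℝ≥0∞)⁻¹ • ∑ i, MeasureTheory.Measure.dirac (ξ i)

/-- The Wasserstein distance (valued in `ℝ≥0∞`) between two Borel probability measures
on ℝⁿ, with ground metric `‖·‖_p`: the infimum over couplings `K` (probability measures on
ℝⁿ × ℝⁿ with the prescribed marginals) of `∫ ‖x − y‖_p dK(x,y)`. -/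
noncomputable def dW {n : ℕ} (p : ℝ≥0∞) (μ ν : MeasureTheory.Measure (Fin n → ℝ)) : ℝ≥0∞ :=
  ⨅ (K : MeasureTheory.Measure ((Fin n → ℝ) × (Fin n → ℝ)))
    (_ : MeasureTheory.IsProbabilityMeasure K)
    (_ : K.map Prod.fst = μ) (_ : K.map Prod.snd = ν),
    ∫⁻ z, ENNReal.ofReal (lpNorm p (z.1 - z.2)) ∂K

lemma aux_cases {p q : ℝ≥0∞} (hp : 1 ≤ p) (hpq : 1 / p + 1 / q = 1) :
    (p = 1 ∧ q = ∞) ∨ (p = ∞ ∧ q = 1) ∨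
      (p ≠ ∞ ∧ q ≠ ∞ ∧ Real.HolderConjugate p.toReal q.toReal) := by
  simp only [one_div] at hpq
  by_cases h1 : p = ∞
  · right; left
    subst h1
    simpa using hpq
  by_cases h2 : q = ∞
  · left
    subst h2
    simpa using hpq
  right; right
  refine ⟨h1, h2, ?_⟩
  have hp0 : p ≠ 0 := by rintro rfl; simp at hp
  have hq0 : q ≠ 0 := by rintro rfl; simp at hpq
  have h := congrArg ENNReal.toReal hpq
  rw [ENNReal.toReal_add (by simpa using hp0) (by simpa using hq0), ENNReal.toReal_inv,
    ENNReal.toReal_inv] at h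
  have hq' : 0 < q.toReal := ENNReal.toReal_pos hq0 h2
  have hp' : 0 < p.toReal := ENNReal.toReal_pos hp0 h1
  exact ⟨by simpa using h, hp', hq'⟩

lemma lpn_one {n : ℕ} (x : Fin n → ℝ) : _root_.lpNorm 1 x = ∑ i, |x i| := by
  simp [_root_.lpNorm]

lemma lpn_top {n : ℕ} (x : Fin n → ℝ) : _root_.lpNorm ∞ x = ⨆ i, |x i| := by
  simp [_root_.lpNorm]

lemma lpn_fin {n : ℕ} {p : ℝ≥0∞} (hp : p ≠ ∞) (x : Fin n → ℝ) :
    _root_.lpNorm p x = (∑ i, |x i| ^ p.toReal) ^ (1 / p.toReal) := by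
  simp [_root_.lpNorm, hp]

lemma lpn_nonneg {n : ℕ} (p : ℝ≥0∞) (x : Fin n → ℝ) : 0 ≤ _root_.lpNorm p x := by
  unfold _root_.lpNorm
  split_ifs
  · exact Real.iSup_nonneg fun i => abs_nonneg _
  · positivity

lemma abs_le_lpn_top {n : ℕ} (x : Fin n → ℝ) (i : Fin n) : |x i| ≤ _root_.lpNorm ∞ x := by
  rw [lpn_top]
  exact le_ciSup (f := fun i => |x i|) (Set.finite_range _).bddAbove i

lemma lpn_meas {n : ℕ} (p : ℝ≥0∞) : Measurable (fun x : Fin n → ℝ => _root_.lpNorm p x) := by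
  unfold _root_.lpNorm
  split_ifs
  · exact Measurable.iSup fun i => by fun_prop
  · fun_prop

lemma ip_le_one_top {n : ℕ} (w x : Fin n → ℝ) :
    ip w x ≤ _root_.lpNorm ∞ w * _root_.lpNorm 1 x := by
  rw [lpn_one, Finset.mul_sum]
  unfold ip
  refine Finset.sum_le_sum fun i _ => ?_
  calc w i * x i ≤ |w i * x i| := le_abs_self _
    _ = |w i| * |x i| := abs_mul _ _
    _ ≤ _ := mul_le_mul_of_nonneg_right (abs_le_lpn_top w i) (abs_nonneg _)

lemma ip_comm' {n : ℕ} (w x : Fin n → ℝ) : ip w x = ip x w := by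
  simp [ip, mul_comm]

lemma ip_le {n : ℕ} {p q : ℝ≥0∞} (hp : 1 ≤ p) (hpq : 1 / p + 1 / q = 1)
    (w x : Fin n → ℝ) : ip w x ≤ _root_.lpNorm q w * _root_.lpNorm p x := by
  rcases aux_cases hp hpq with ⟨rfl, rfl⟩ | ⟨rfl, rfl⟩ | ⟨h1, h2, h⟩
  · exact ip_le_one_top w x
  · rw [ip_comm', mul_comm]; exact ip_le_one_top x w
  · rw [lpn_fin h1, lpn_fin h2]
    exact Real.inner_le_Lp_mul_Lq _ _ _ h.symm

lemma lpn_smul {n : ℕ} {p : ℝ≥0∞} (hp : 1 ≤ p) {c : ℝ} (hc : 0 ≤ c) (x : Fin n → ℝ) :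
    _root_.lpNorm p (c • x) = c * _root_.lpNorm p x := by
  by_cases h : p = ∞
  · subst h
    simp only [lpn_top, Pi.smul_apply, smul_eq_mul, abs_mul, abs_of_nonneg hc]
    rw [Real.mul_iSup_of_nonneg hc]
  · have hp0 : p ≠ 0 := by rintro rfl; simp at hp
    have hp' : 0 < p.toReal := ENNReal.toReal_pos hp0 h
    simp only [lpn_fin h, Pi.smul_apply, smul_eq_mul, abs_mul, abs_of_nonneg hc]
    simp only [Real.mul_rpow hc (abs_nonneg _), ← Finset.mul_sum]
    rw [Real.mul_rpow (by positivity) (by positivity), ← Real.rpow_mul hc,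
      mul_one_div_cancel hp'.ne', Real.rpow_one]

lemma lpn_neg {n : ℕ} (p : ℝ≥0∞) (x : Fin n → ℝ) :
    _root_.lpNorm p (-x) = _root_.lpNorm p x := by
  simp [_root_.lpNorm]

lemma sgn_mul (a : ℝ) : a * (SignType.sign a : ℝ) = |a| := by
  rw [mul_comm]; exact sign_mul_self a

lemma abs_sgn_le (a : ℝ) : |(SignType.sign a : ℝ)| ≤ 1 := by
  rcases lt_trichotomy a 0 with h | h | h <;> simp [h]

lemma exists_dual {n : ℕ} (hn : 1 ≤ n) {p q : ℝ≥0∞} (hp : 1 ≤ p) (hpq : 1 / p + 1 / q = 1)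
    (v : Fin n → ℝ) : ∃ u : Fin n → ℝ, _root_.lpNorm p u ≤ 1 ∧ ip u v = _root_.lpNorm q v := by
  have : Nonempty (Fin n) := ⟨⟨0, hn⟩⟩
  rcases aux_cases hp hpq with ⟨rfl, rfl⟩ | ⟨rfl, rfl⟩ | ⟨h1, h2, h⟩
  · obtain ⟨j, hj⟩ := exists_eq_ciSup_of_finite (f := fun i => |v i|)
    refine ⟨Pi.single j (SignType.sign (v j) : ℝ), ?_, ?_⟩
    · rw [lpn_one, Finset.sum_eq_single j]
      · simpa using abs_sgn_le (v j)
      · intro b _ hb; simp [hb]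
      · simp
    · rw [lpn_top, ← hj]
      unfold ip
      rw [Finset.sum_eq_single j]
      · simp
      · intro b _ hb; simp [hb]
      · simp
  · refine ⟨fun i => (SignType.sign (v i) : ℝ), ?_, ?_⟩
    · rw [lpn_top]
      exact ciSup_le fun i => abs_sgn_le (v i)
    · rw [lpn_one]
      unfold ip
      exact Finset.sum_congr rfl fun i _ => by rw [mul_comm, sgn_mul]
  · obtain ⟨g, hg, hg2⟩ := (NNReal.isGreatest_Lp Finset.univ
      (fun i => Real.nnabs (v i)) h.symm).1
    refine ⟨fun i => (SignType.sign (v i) : ℝ) * g i, ?_, ?_⟩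
    · rw [lpn_fin h1]
      refine Real.rpow_le_one (by positivity) ?_ (by positivity)
      have hg' : ∑ i, (g i : ℝ) ^ p.toReal ≤ 1 := by exact_mod_cast hg
      refine le_trans (Finset.sum_le_sum fun i _ => ?_) hg'
      refine Real.rpow_le_rpow (abs_nonneg _) ?_ h.nonneg
      rw [abs_mul, NNReal.abs_eq]
      exact mul_le_of_le_one_left (g i).2 (abs_sgn_le _)
    · rw [lpn_fin h2]
      have := congrArg NNReal.toReal hg2
      simp only [NNReal.coe_sum, NNReal.coe_mul, NNReal.coe_rpow, Real.coe_nnabs] at this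
      rw [← this]
      unfold ip
      exact Finset.sum_congr rfl fun i _ => by
        rw [mul_comm, ← mul_assoc, sgn_mul]

lemma emp_prob {n N : ℕ} (hN : 1 ≤ N) (ξ : Fin N → Fin n → ℝ) :
    IsProbabilityMeasure (empirical N ξ) := by
  constructor
  simp [empirical]
  exact ENNReal.inv_mul_cancel (by simp; omega) (by simp)

lemma emp_integrable {n N : ℕ} (hN : 1 ≤ N) (ξ : Fin N → Fin n → ℝ) (g : (Fin n → ℝ) → ℝ) :
    Integrable g (empirical N ξ) := by
  unfold empirical
  refine Integrable.smul_measure ?_ (by simp; omega)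
  rw [integrable_finsetSum_measure]
  intro i _
  exact integrable_dirac (by simp)

lemma emp_integral {n N : ℕ} (ξ : Fin N → Fin n → ℝ) (g : (Fin n → ℝ) → ℝ) :
    ∫ x, g x ∂(empirical N ξ) = (1 / (N : ℝ)) * ∑ i, g (ξ i) := by
  unfold empirical
  rw [integral_smul_measure, integral_finsetSum_measure]
  · simp
  · intro i _
    exact integrable_dirac (by simp)

lemma ip_meas {n : ℕ} (v : Fin n → ℝ) : Measurable (fun x => ip x v) := by
  unfold ip; fun_prop

lemma hfun_meas {n : ℕ} (v : Fin n → ℝ) (t : ℝ) : Measurable (hfun v t) := by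
  unfold hfun
  exact ((ip_meas v).sub_const t).max measurable_const

lemma hfun_nonneg {n : ℕ} (v : Fin n → ℝ) (t : ℝ) (x : Fin n → ℝ) : 0 ≤ hfun v t x :=
  le_max_right _ _

lemma ip_add_left {n : ℕ} (x y v : Fin n → ℝ) : ip (x + y) v = ip x v + ip y v := by
  simp [ip, add_mul, Finset.sum_add_distrib]

lemma ip_smul_left {n : ℕ} (c : ℝ) (y v : Fin n → ℝ) : ip (c • y) v = c * ip y v := by
  simp [ip, mul_assoc, Finset.mul_sum]

lemma hfun_lip {n : ℕ} {p q : ℝ≥0∞} (hp : 1 ≤ p) (hpq : 1 / p + 1 / q = 1)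
    (v : Fin n → ℝ) (t : ℝ) (x y : Fin n → ℝ) :
    hfun v t y ≤ hfun v t x + _root_.lpNorm q v * _root_.lpNorm p (x - y) := by
  have h1 := ip_le hp hpq v (y - x)
  rw [ip_comm', ← lpn_neg p (y - x), neg_sub] at h1
  have h2 : ip y v = ip (y - x) v + ip x v := by rw [← ip_add_left]; simp
  have h3 := mul_nonneg (lpn_nonneg q v) (lpn_nonneg p (x - y))
  have h4 : ip x v - t ≤ hfun v t x := le_max_left _ _
  have h5 := hfun_nonneg v t x
  rw [hfun]
  refine max_le ?_ ?_ <;> linarith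

lemma upper {n : ℕ} {p q : ℝ≥0∞} (hp : 1 ≤ p) (hpq : 1 / p + 1 / q = 1)
    (v : Fin n → ℝ) (t ε : ℝ) (hε : 0 ≤ ε)
    {N : ℕ} (hN : 1 ≤ N) (ξ : Fin N → Fin n → ℝ) (μ : Measure (Fin n → ℝ))
    (hμ : dW p (empirical N ξ) μ ≤ ENNReal.ofReal ε) :
    ∫ x, hfun v t x ∂μ ≤
      (1 / (N : ℝ)) * ∑ i, hfun v t (ξ i) + ε * _root_.lpNorm q v := by
  set A := (1 / (N : ℝ)) * ∑ i, hfun v t (ξ i) with hA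
  have hA0 : 0 ≤ A := mul_nonneg (by positivity) (Finset.sum_nonneg fun i _ => hfun_nonneg _ _ _)
  have hq0 := lpn_nonneg q v
  have hF : ∫⁻ x, ENNReal.ofReal (hfun v t x) ∂(empirical N ξ) = ENNReal.ofReal A := by
    rw [← ofReal_integral_eq_lintegral_ofReal (emp_integrable hN ξ _)
      (ae_of_all _ (hfun_nonneg v t)), emp_integral]
  have hm := hfun_meas v t
  have key : ∀ δ : ℝ, 0 < δ → ∫ x, hfun v t x ∂μ ≤ A + _root_.lpNorm q v * (ε + δ) := by
    intro δ hδ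
    have hlt : dW p (empirical N ξ) μ < ENNReal.ofReal (ε + δ) :=
      lt_of_le_of_lt hμ ((ENNReal.ofReal_lt_ofReal_iff (by linarith)).2 (by linarith))
    simp only [dW, iInf_lt_iff] at hlt
    obtain ⟨K, hK, h1, h2, h3⟩ := hlt
    have hmo : Measurable (fun x => ENNReal.ofReal (hfun v t x)) := hm.ennreal_ofReal
    have hm1 : Measurable (fun z : (Fin n → ℝ) × (Fin n → ℝ) => ENNReal.ofReal (hfun v t z.1)) :=
      hmo.comp measurable_fst
    have hF1 : ∫⁻ z, ENNReal.ofReal (hfun v t z.1) ∂K = ENNReal.ofReal A := by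
      rw [← hF, ← h1, lintegral_map hmo measurable_fst]
    rw [integral_eq_lintegral_of_nonneg_ae (ae_of_all _ (hfun_nonneg v t))
      hm.aestronglyMeasurable]
    refine ENNReal.toReal_le_of_le_ofReal (by positivity) ?_
    rw [← h2, lintegral_map hmo measurable_snd]
    calc ∫⁻ z, ENNReal.ofReal (hfun v t z.2) ∂K
        ≤ ∫⁻ z, (ENNReal.ofReal (hfun v t z.1) + ENNReal.ofReal (_root_.lpNorm q v) *
            ENNReal.ofReal (_root_.lpNorm p (z.1 - z.2))) ∂K := by
          refine lintegral_mono fun z => ?_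
          rw [← ENNReal.ofReal_mul hq0, ← ENNReal.ofReal_add (hfun_nonneg _ _ _)
            (mul_nonneg hq0 (lpn_nonneg _ _))]
          exact ENNReal.ofReal_le_ofReal (hfun_lip hp hpq v t _ _)
      _ = ENNReal.ofReal A + ENNReal.ofReal (_root_.lpNorm q v) *
            ∫⁻ z, ENNReal.ofReal (_root_.lpNorm p (z.1 - z.2)) ∂K := by
          rw [lintegral_add_left hm1,
            lintegral_const_mul' _ _ ENNReal.ofReal_ne_top, hF1]
      _ ≤ ENNReal.ofReal A + ENNReal.ofReal (_root_.lpNorm q v) * ENNReal.ofReal (ε + δ) := by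
          gcongr
      _ = _ := by
          rw [← ENNReal.ofReal_mul hq0, ← ENNReal.ofReal_add hA0 (by positivity)]
  have ht : Tendsto (fun δ : ℝ => A + _root_.lpNorm q v * (ε + δ)) (𝓝[>] 0)
      (𝓝 (A + ε * _root_.lpNorm q v)) := by
    have : Continuous (fun δ : ℝ => A + _root_.lpNorm q v * (ε + δ)) := by fun_prop
    have h := this.tendsto 0
    simp only [add_zero, mul_comm _ ε] at h
    exact h.mono_left nhdsWithin_le_nhds
  exact ge_of_tendsto ht (eventually_nhdsWithin_of_forall fun δ hδ => key δ hδ)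

lemma lower {n : ℕ} {p q : ℝ≥0∞} (hp : 1 ≤ p)
    (v : Fin n → ℝ) (t ε : ℝ) (hε : 0 ≤ ε)
    {N : ℕ} (hN : 1 ≤ N) (ξ : Fin N → Fin n → ℝ) (u : Fin n → ℝ)
    (hu : _root_.lpNorm p u ≤ 1) (huv : ip u v = _root_.lpNorm q v)
    (η : ℝ) (h0 : 0 < η) (h1 : η ≤ 1) :
    ∃ μ : Measure (Fin n → ℝ), IsProbabilityMeasure μ ∧
        Integrable (fun x => _root_.lpNorm p x) μ ∧
        dW p (empirical N ξ) μ ≤ ENNReal.ofReal ε ∧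
        (1 - η) * ((1 / (N : ℝ)) * ∑ i, hfun v t (ξ i)) +
          η * ((1 / (N : ℝ)) * ∑ i, (ip (ξ i) v - t)) + ε * _root_.lpNorm q v
          ≤ ∫ x, hfun v t x ∂μ := by
  have hF := emp_prob hN ξ
  set F := empirical N ξ with hFdef
  let c : ℝ := ε / η
  have hc : 0 ≤ c := by positivity
  have hηc : η * c = ε := by simp only [c]; field_simp
  let T : (Fin n → ℝ) → (Fin n → ℝ) := fun x => x + c • u
  have hT : Measurable T := by fun_prop
  have hsum : ENNReal.ofReal (1 - η) + ENNReal.ofReal η = 1 := by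
    rw [← ENNReal.ofReal_add (by linarith) h0.le]; simp
  have hint : ∀ g : (Fin n → ℝ) → ℝ, Measurable g →
      Integrable g (ENNReal.ofReal (1 - η) • F) ∧
      Integrable g (ENNReal.ofReal η • F.map T) := by
    intro g hg
    refine ⟨(emp_integrable hN ξ g).smul_measure ENNReal.ofReal_ne_top,
      Integrable.smul_measure ?_ ENNReal.ofReal_ne_top⟩
    rw [integrable_map_measure hg.aestronglyMeasurable hT.aemeasurable]
    exact emp_integrable hN ξ _
  have hFT : IsProbabilityMeasure (F.map T) := Measure.isProbabilityMeasure_map hT.aemeasurable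
  refine ⟨ENNReal.ofReal (1 - η) • F + ENNReal.ofReal η • F.map T, ?_, ?_, ?_, ?_⟩
  · constructor
    simp [hsum]
  · exact (hint _ (lpn_meas p)).1.add_measure (hint _ (lpn_meas p)).2
  · have hd : Measurable (fun x : Fin n → ℝ => (x, x)) := by fun_prop
    have hd2 : Measurable (fun x : Fin n → ℝ => (x, T x)) := by fun_prop
    have hp1 : IsProbabilityMeasure (F.map (fun x : Fin n → ℝ => (x, x))) :=
      Measure.isProbabilityMeasure_map hd.aemeasurable
    have hp2 : IsProbabilityMeasure (F.map (fun x : Fin n → ℝ => (x, T x))) :=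
      Measure.isProbabilityMeasure_map hd2.aemeasurable
    have e1 : (Prod.fst ∘ fun x : Fin n → ℝ => (x, x)) = id := rfl
    have e2 : (Prod.snd ∘ fun x : Fin n → ℝ => (x, x)) = id := rfl
    have e3 : (Prod.fst ∘ fun x : Fin n → ℝ => (x, T x)) = id := rfl
    have e4 : (Prod.snd ∘ fun x : Fin n → ℝ => (x, T x)) = T := rfl
    unfold dW
    refine iInf_le_of_le (ENNReal.ofReal (1 - η) • F.map (fun x => (x, x)) +
      ENNReal.ofReal η • F.map (fun x => (x, T x))) ?_
    refine iInf_le_of_le ⟨by simp [hsum]⟩ ?_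
    refine iInf_le_of_le ?_ (iInf_le_of_le ?_ ?_)
    · rw [Measure.map_add _ _ measurable_fst, Measure.map_smul, Measure.map_smul,
        Measure.map_map measurable_fst hd, Measure.map_map measurable_fst hd2, e1, e3,
        Measure.map_id, ← add_smul, hsum, one_smul]
    · rw [Measure.map_add _ _ measurable_snd, Measure.map_smul, Measure.map_smul,
        Measure.map_map measurable_snd hd, Measure.map_map measurable_snd hd2, e2, e4,
        Measure.map_id]
    · have hm : Measurable (fun z : (Fin n → ℝ) × (Fin n → ℝ) =>
          ENNReal.ofReal (_root_.lpNorm p (z.1 - z.2))) :=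
        ((lpn_meas p).comp (measurable_fst.sub measurable_snd)).ennreal_ofReal
      have hz : _root_.lpNorm p (0 : Fin n → ℝ) = 0 := by
        simpa using lpn_smul hp le_rfl (0 : Fin n → ℝ)
      have hcu : ∀ x, _root_.lpNorm p (x - T x) = c * _root_.lpNorm p u := by
        intro x
        have : x - T x = - (c • u) := by simp [T]
        rw [this, lpn_neg, lpn_smul hp hc]
      rw [lintegral_add_measure, lintegral_smul_measure, lintegral_smul_measure,
        lintegral_map hm hd, lintegral_map hm hd2]
      simp only [sub_self, hz, hcu, ENNReal.ofReal_zero, lintegral_zero, lintegral_const,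
        measure_univ, mul_one, smul_eq_mul, mul_zero, zero_add]
      rw [← ENNReal.ofReal_mul h0.le]
      refine ENNReal.ofReal_le_ofReal ?_
      rw [← mul_assoc, hηc]
      exact mul_le_of_le_one_right hε hu
  · have hm := hfun_meas v t
    rw [integral_add_measure (hint _ hm).1 (hint _ hm).2, integral_smul_measure,
      integral_smul_measure, integral_map hT.aemeasurable hm.aestronglyMeasurable,
      emp_integral, emp_integral, ENNReal.toReal_ofReal (by linarith),
      ENNReal.toReal_ofReal h0.le, smul_eq_mul, smul_eq_mul, add_assoc]
    gcongr
    have hN' : (N : ℝ) ≠ 0 := by positivity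
    have e : η * ((1 / (N : ℝ)) * ∑ i, (ip (ξ i) v - t)) + ε * _root_.lpNorm q v =
        η * ((1 / (N : ℝ)) * ∑ i, (ip (ξ i) v - t + c * _root_.lpNorm q v)) := by
      rw [Finset.sum_add_distrib]
      simp only [Finset.sum_const, Finset.card_univ, Fintype.card_fin, nsmul_eq_mul]
      rw [← hηc]
      field_simp
    rw [e]
    gcongr with i
    have : ip (T (ξ i)) v = ip (ξ i) v + c * _root_.lpNorm q v := by
      simp only [T]
      rw [ip_add_left, ip_smul_left, huv]
    refine le_trans (le_of_eq ?_) (le_max_left _ _)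
    rw [this]; ring

/-- Theorem 1, inner worst-case expectation: the supremum of `∫ h(v,t,·) dμ`
over probability measures with finite first moment in the Wasserstein ball of radius `ε`
around `F_N` equals the optimal value of the dual LP, i.e.
`(1/N)Σ max(⟨v,ξ̂ⁱ⟩ − t, 0) + ε‖v‖_q`. -/
theorem stmt6 (n : ℕ) (hn : 1 ≤ n) (p q : ℝ≥0∞) (hp : 1 ≤ p) (hpq : 1 / p + 1 / q = 1)
    (v : Fin n → ℝ) (t ε : ℝ) (hε : 0 ≤ ε)
    (N : ℕ) (hN : 1 ≤ N) (ξ : Fin N → Fin n → ℝ) :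
    sSup {r : ℝ | ∃ μ : Measure (Fin n → ℝ), IsProbabilityMeasure μ ∧
        Integrable (fun x => lpNorm p x) μ ∧
        dW p (empirical N ξ) μ ≤ ENNReal.ofReal ε ∧ r = ∫ x, hfun v t x ∂μ} =
      sInf {y : ℝ | ∃ (s : Fin N → ℝ) (lam : ℝ),
        (∀ i, ip v (ξ i) - t ≤ s i ∧ 0 ≤ s i) ∧ lpNorm q v ≤ lam ∧
        y = (1 / (N : ℝ)) * ∑ i, s i + lam * ε} ∧
    sSup {r : ℝ | ∃ μ : Measure (Fin n → ℝ), IsProbabilityMeasure μ ∧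
        Integrable (fun x => lpNorm p x) μ ∧
        dW p (empirical N ξ) μ ≤ ENNReal.ofReal ε ∧ r = ∫ x, hfun v t x ∂μ} =
      (1 / (N : ℝ)) * ∑ i, max (ip v (ξ i) - t) 0 + ε * lpNorm q v := by
  have hh : ∀ i, max (ip v (ξ i) - t) 0 = hfun v t (ξ i) := fun i => by
    rw [hfun, ip_comm']
  simp only [hh]
  set A := (1 / (N : ℝ)) * ∑ i, hfun v t (ξ i) with hA
  have hinf : IsLeast {y : ℝ | ∃ (s : Fin N → ℝ) (lam : ℝ),
        (∀ i, ip v (ξ i) - t ≤ s i ∧ 0 ≤ s i) ∧ lpNorm q v ≤ lam ∧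
        y = (1 / (N : ℝ)) * ∑ i, s i + lam * ε} (A + ε * lpNorm q v) := by
    constructor
    · refine ⟨fun i => hfun v t (ξ i), lpNorm q v, fun i => ?_, le_rfl, by rw [hA]; ring⟩
      beta_reduce
      rw [← hh]
      exact ⟨le_max_left _ _, le_max_right _ _⟩
    · rintro y ⟨s, lam, hs, hl, rfl⟩
      rw [mul_comm ε]
      refine add_le_add ?_ (mul_le_mul_of_nonneg_right hl hε)
      refine mul_le_mul_of_nonneg_left (Finset.sum_le_sum fun i _ => ?_) (by positivity)
      rw [← hh]
      exact max_le (hs i).1 (hs i).2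
  rw [hinf.csInf_eq]
  refine (and_self_iff).2 ?_
  obtain ⟨u, hu, huv⟩ := exists_dual hn hp hpq v
  have hub : ∀ r ∈ {r : ℝ | ∃ μ : Measure (Fin n → ℝ), IsProbabilityMeasure μ ∧
        Integrable (fun x => lpNorm p x) μ ∧
        dW p (empirical N ξ) μ ≤ ENNReal.ofReal ε ∧ r = ∫ x, hfun v t x ∂μ},
        r ≤ A + ε * lpNorm q v := by
    rintro r ⟨μ, _, _, hd, rfl⟩
    exact upper hp hpq v t ε hε hN ξ μ hd
  apply le_antisymm
  · obtain ⟨μ, a, b, d, _⟩ := lower (q := q) hp v t ε hε hN ξ u hu huv 1 one_pos le_rfl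
    exact csSup_le ⟨_, μ, a, b, d, rfl⟩ hub
  · set B := (1 / (N : ℝ)) * ∑ i, (ip (ξ i) v - t) with hB
    have ht : Tendsto (fun η : ℝ => (1 - η) * A + η * B + ε * lpNorm q v) (𝓝[>] 0)
        (𝓝 (A + ε * lpNorm q v)) := by
      have : Continuous (fun η : ℝ => (1 - η) * A + η * B + ε * lpNorm q v) := by fun_prop
      have h := this.tendsto 0
      simp only [sub_zero, one_mul, zero_mul, add_zero] at h
      exact h.mono_left nhdsWithin_le_nhds
    refine le_of_tendsto ht ?_
    filter_upwards [Ioc_mem_nhdsGT (zero_lt_one (α := ℝ))] with η hη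
    obtain ⟨μ, a, b, d, e⟩ := lower (q := q) hp v t ε hε hN ξ u hu huv η hη.1 hη.2
    exact e.trans (le_csSup ⟨_, hub⟩ ⟨μ, a, b, d, rfl⟩)
end

section
/- (Theorem 1, worst-case mean-excess travel time) Let v ∈ ℝⁿ, α ∈ (0,1], ε ≥ 0 and let ξ̂¹,…,ξ̂ᴺ ∈ ℝⁿ (N ≥ 1) with empirical distribution F_N. Then the infimum over t ∈ ℝ of t + (1/α)·sup{ ∫ h(v,t,ξ) dμ(ξ) : μ a Borel probability measure on ℝⁿ with finite first moment and d_W(F_N,μ) ≤ ε } equals the optimal value of the linear program minimizing t + (1/α)·((1/N)·Σ_{i=1}^N s_i + λ·ε) over (t,s,λ) ∈ ℝ × ℝᴺ × ℝ subject to ⟨v,ξ̂ⁱ⟩ − t ≤ s_i, s_i ≥ 0 for all i, and ‖v‖_q ≤ λ. -/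
open MeasureTheory Filter Topology
open scoped ENNReal BigOperators

theorem aux_norm {n : ℕ} (p : ℝ≥0∞) [Fact (1 ≤ p)] (x : Fin n → ℝ) :
    _root_.lpNorm p x = ‖(WithLp.toLp p x : PiLp p (fun _ : Fin n => ℝ))‖ := by
  unfold _root_.lpNorm
  split_ifs with h
  · subst h
    rw [PiLp.norm_eq_ciSup]; rfl
  · have h1 : (1 : ℝ≥0∞) ≤ p := Fact.out
    have : 0 < p.toReal := ENNReal.toReal_pos (by positivity) h
    rw [PiLp.norm_eq_sum this]; rfl

theorem aux_nonneg {n : ℕ} (p : ℝ≥0∞) (hp : 1 ≤ p) (x : Fin n → ℝ) : 0 ≤ _root_.lpNorm p x := by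
  have : Fact (1 ≤ p) := ⟨hp⟩
  rw [aux_norm]; exact norm_nonneg _

theorem aux_cont {n : ℕ} (p : ℝ≥0∞) (hp : 1 ≤ p) :
    Continuous (fun x : Fin n → ℝ => _root_.lpNorm p x) := by
  have : Fact (1 ≤ p) := ⟨hp⟩
  simp_rw [aux_norm]
  exact (PiLp.continuous_toLp p _).norm

theorem aux_smul {n : ℕ} (p : ℝ≥0∞) (hp : 1 ≤ p) (c : ℝ) (x : Fin n → ℝ) :
    _root_.lpNorm p (c • x) = |c| * _root_.lpNorm p x := by
  have : Fact (1 ≤ p) := ⟨hp⟩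
  rw [aux_norm, aux_norm, WithLp.toLp_smul, norm_smul, Real.norm_eq_abs]

theorem aux_conj (p q : ℝ≥0∞) (hp : 1 ≤ p) (hpq : 1 / p + 1 / q = 1) :
    (p = 1 ∧ q = ∞) ∨ (p = ∞ ∧ q = 1) ∨
      (p ≠ ∞ ∧ q ≠ ∞ ∧ p.toReal.HolderConjugate q.toReal) := by
  have : ENNReal.HolderConjugate p q := ⟨by simpa using hpq⟩
  by_cases h1 : p = ∞
  · subst h1
    right; left
    simpa using hpq
  by_cases h2 : q = ∞
  · subst h2
    left
    simpa using hpq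
  · right; right
    exact ⟨h1, h2, ENNReal.HolderConjugate.toReal_of_ne_top h1 h2⟩

theorem aux_le_top {n : ℕ} (x : Fin n → ℝ) (i : Fin n) : |x i| ≤ ⨆ i, |x i| :=
  le_ciSup (f := fun i => |x i|) (Set.finite_range _).bddAbove i

theorem aux_holder {n : ℕ} (p q : ℝ≥0∞) (hp : 1 ≤ p) (hpq : 1 / p + 1 / q = 1)
    (v x : Fin n → ℝ) : ip x v ≤ _root_.lpNorm q v * _root_.lpNorm p x := by
  unfold ip
  rcases aux_conj p q hp hpq with ⟨rfl, rfl⟩ | ⟨rfl, rfl⟩ | ⟨h1, h2, h⟩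
  · simp only [_root_.lpNorm, if_true, ENNReal.one_ne_top, if_false, ENNReal.toReal_one, Real.rpow_one,
      div_one]
    rw [Finset.mul_sum]
    refine Finset.sum_le_sum fun i _ => ?_
    calc x i * v i ≤ |x i * v i| := le_abs_self _
      _ = |v i| * |x i| := by rw [abs_mul, mul_comm]
      _ ≤ _ := mul_le_mul_of_nonneg_right (aux_le_top v i) (abs_nonneg _)
  · simp only [_root_.lpNorm, if_true, ENNReal.one_ne_top, if_false, ENNReal.toReal_one, Real.rpow_one,
      div_one]
    rw [Finset.sum_mul]
    refine Finset.sum_le_sum fun i _ => ?_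
    calc x i * v i ≤ |x i * v i| := le_abs_self _
      _ = |v i| * |x i| := by rw [abs_mul, mul_comm]
      _ ≤ _ := mul_le_mul_of_nonneg_left (aux_le_top x i) (abs_nonneg _)
  · simp only [_root_.lpNorm, if_neg h1, if_neg h2]
    rw [mul_comm]
    exact Real.inner_le_Lp_mul_Lq Finset.univ x v h

theorem aux_attain {n : ℕ} (hn : 1 ≤ n) (p q : ℝ≥0∞) (hp : 1 ≤ p) (hpq : 1 / p + 1 / q = 1)
    (v : Fin n → ℝ) : ∃ u : Fin n → ℝ, _root_.lpNorm p u ≤ 1 ∧ ip u v = _root_.lpNorm q v := by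
  have : Nonempty (Fin n) := ⟨⟨0, hn⟩⟩
  have hs : ∀ a : ℝ, (SignType.sign a : ℝ) * a = |a| := fun a => by
    rw [mul_comm]; exact self_mul_sign a
  have hs1 : ∀ a : ℝ, |(SignType.sign a : ℝ)| ≤ 1 := fun a => by
    rcases lt_trichotomy a 0 with h | h | h <;> simp [h]
  unfold ip
  rcases aux_conj p q hp hpq with ⟨rfl, rfl⟩ | ⟨rfl, rfl⟩ | ⟨h1, h2, h⟩
  · simp only [_root_.lpNorm, if_true, ENNReal.one_ne_top, if_false, ENNReal.toReal_one, Real.rpow_one,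
      div_one]
    obtain ⟨j, hj⟩ := exists_eq_ciSup_of_finite (f := fun i => |v i|)
    refine ⟨Pi.single j (SignType.sign (v j) : ℝ), ?_, ?_⟩
    · rw [Finset.sum_eq_single j]
      · simpa using hs1 (v j)
      · intro b _ hb; simp [hb]
      · simp
    · rw [← hj, Finset.sum_eq_single j]
      · simpa using hs (v j)
      · intro b _ hb; simp [hb]
      · simp
  · simp only [_root_.lpNorm, if_true, ENNReal.one_ne_top, if_false, ENNReal.toReal_one, Real.rpow_one,
      div_one]
    refine ⟨fun i => (SignType.sign (v i) : ℝ), ciSup_le fun i => hs1 _, ?_⟩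
    exact Finset.sum_congr rfl fun i _ => hs _
  · simp only [_root_.lpNorm, if_neg h1, if_neg h2]
    obtain ⟨g, hg, hg2⟩ := (NNReal.isGreatest_Lp Finset.univ (fun i => Real.nnabs (v i)) h.symm).1
    refine ⟨fun i => (SignType.sign (v i) : ℝ) * g i, ?_, ?_⟩
    · refine Real.rpow_le_one (Finset.sum_nonneg fun i _ => by positivity) ?_ (by positivity)
      have hg' : ∑ i, ((g i : ℝ)) ^ p.toReal ≤ 1 := by
        have : ∑ i, g i ^ p.toReal ≤ 1 := hg
        exact_mod_cast this
      refine le_trans (Finset.sum_le_sum fun i _ => ?_) hg'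
      refine Real.rpow_le_rpow (abs_nonneg _) ?_ (by positivity)
      rw [abs_mul, NNReal.abs_eq]
      exact mul_le_of_le_one_left (g i).2 (hs1 _)
    · have := congrArg (fun z : NNReal => (z : ℝ)) hg2
      push_cast at this
      rw [← this]
      refine Finset.sum_congr rfl fun i _ => ?_
      rw [mul_right_comm, hs]

theorem aux_emp_prob {n : ℕ} (N : ℕ) (hN : 1 ≤ N) (ξ : Fin N → Fin n → ℝ) :
    IsProbabilityMeasure (empirical N ξ) := by
  constructor
  have h0 : (N : ℝ≥0∞) ≠ 0 := by exact_mod_cast (by omega : N ≠ 0)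
  simp [empirical, Measure.finsetSum_apply, ENNReal.inv_mul_cancel h0]

theorem aux_emp_int {n : ℕ} (N : ℕ) (hN : 1 ≤ N) (ξ : Fin N → Fin n → ℝ)
    (f : (Fin n → ℝ) → ℝ) : Integrable f (empirical N ξ) := by
  have h0 : (N : ℝ≥0∞) ≠ 0 := by exact_mod_cast (by omega : N ≠ 0)
  unfold empirical
  refine Integrable.smul_measure ?_ (by simpa using h0)
  rw [integrable_finsetSum_measure]
  intro i _
  exact integrable_dirac (by simp)

theorem aux_emp_integral {n : ℕ} (N : ℕ) (ξ : Fin N → Fin n → ℝ)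
    (f : (Fin n → ℝ) → ℝ) : ∫ x, f x ∂(empirical N ξ) = (1 / (N : ℝ)) * ∑ i, f (ξ i) := by
  unfold empirical
  rw [integral_smul_measure, integral_finsetSum_measure]
  · simp
  · intro i _
    exact integrable_dirac (by simp)

theorem aux_ip_cont {n : ℕ} (v : Fin n → ℝ) : Continuous (fun x : Fin n → ℝ => ip x v) := by
  unfold ip; fun_prop

theorem aux_h_cont {n : ℕ} (v : Fin n → ℝ) (t : ℝ) :
    Continuous (fun x : Fin n → ℝ => hfun v t x) := by
  have := aux_ip_cont v
  unfold hfun; fun_prop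

theorem aux_ip_add {n : ℕ} (v x y : Fin n → ℝ) : ip (x + y) v = ip x v + ip y v := by
  simp [ip, add_mul, Finset.sum_add_distrib]

theorem aux_ip_smul {n : ℕ} (v x : Fin n → ℝ) (c : ℝ) : ip (c • x) v = c * ip x v := by
  simp [ip, Finset.mul_sum, mul_assoc]

theorem aux_h_lip {n : ℕ} (p q : ℝ≥0∞) (hp : 1 ≤ p) (hpq : 1 / p + 1 / q = 1)
    (v : Fin n → ℝ) (t : ℝ) (x y : Fin n → ℝ) :
    hfun v t y ≤ hfun v t x + _root_.lpNorm q v * _root_.lpNorm p (x - y) := by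
  have h1 := aux_holder p q hp hpq v ((-1 : ℝ) • (x - y))
  rw [aux_smul p hp, abs_neg, abs_one, one_mul] at h1
  have h2 : ip y v = ip x v + ip ((-1 : ℝ) • (x - y)) v := by
    rw [← aux_ip_add]; congr 1; ext i; simp
  have h3 : 0 ≤ _root_.lpNorm q v * _root_.lpNorm p (x - y) := by
    have hq : 1 ≤ q := by
      rcases aux_conj p q hp hpq with ⟨_, rfl⟩ | ⟨_, rfl⟩ | ⟨_, h2, h⟩
      · simp
      · simp
      · rw [← ENNReal.ofReal_toReal h2]
        simpa using h.symm.lt.le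
    exact mul_nonneg (aux_nonneg q hq v) (aux_nonneg p hp _)
  unfold hfun
  refine max_le ?_ ?_
  · have := le_max_left (ip x v - t) 0
    linarith
  · have := le_max_right (ip x v - t) 0
    linarith

theorem aux_upper {n : ℕ} (p q : ℝ≥0∞) (hp : 1 ≤ p) (hpq : 1 / p + 1 / q = 1)
    (v : Fin n → ℝ) (t ε : ℝ) (hε : 0 ≤ ε) (hL : 0 ≤ _root_.lpNorm q v)
    (N : ℕ) (hN : 1 ≤ N) (ξ : Fin N → Fin n → ℝ)
    (μ : Measure (Fin n → ℝ)) (hd : dW p (empirical N ξ) μ ≤ ENNReal.ofReal ε) :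
    ∫ x, hfun v t x ∂μ ≤
      (1 / (N : ℝ)) * ∑ i, hfun v t (ξ i) + _root_.lpNorm q v * ε := by
  set L := _root_.lpNorm q v with hLdef
  set A := (1 / (N : ℝ)) * ∑ i, hfun v t (ξ i) with hA
  have key : ∀ δ : ℝ, 0 < δ → ∫ x, hfun v t x ∂μ ≤ A + L * (ε + δ) := by
    intro δ hδ
    have hlt : dW p (empirical N ξ) μ < ENNReal.ofReal (ε + δ) :=
      lt_of_le_of_lt hd ((ENNReal.ofReal_lt_ofReal_iff (by linarith)).2 (by linarith))
    unfold dW at hlt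
    simp only [iInf_lt_iff] at hlt
    obtain ⟨K, hK, h1, h2, hc⟩ := hlt
    have hnn : ∀ z : (Fin n → ℝ) × (Fin n → ℝ), 0 ≤ _root_.lpNorm p (z.1 - z.2) :=
      fun z => aux_nonneg p hp _
    have hcont : Continuous fun z : (Fin n → ℝ) × (Fin n → ℝ) => _root_.lpNorm p (z.1 - z.2) :=
      (aux_cont p hp).comp (by fun_prop)
    have hi : Integrable (fun z : (Fin n → ℝ) × (Fin n → ℝ) => _root_.lpNorm p (z.1 - z.2)) K := by
      refine ⟨hcont.aestronglyMeasurable, ?_⟩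
      rw [hasFiniteIntegral_iff_ofReal (Eventually.of_forall hnn)]
      exact hc.trans ENNReal.ofReal_lt_top
    have hcost : ∫ z, _root_.lpNorm p (z.1 - z.2) ∂K ≤ ε + δ := by
      rw [← ofReal_integral_eq_lintegral_ofReal hi (Eventually.of_forall hnn)] at hc
      exact ((ENNReal.ofReal_lt_ofReal_iff (by linarith)).1 hc).le
    have hh1 : Integrable (fun z : (Fin n → ℝ) × (Fin n → ℝ) => hfun v t z.1) K := by
      have := aux_emp_int N hN ξ (hfun v t)
      rw [← h1, integrable_map_measure (aux_h_cont v t).aestronglyMeasurable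
        measurable_fst.aemeasurable] at this
      exact this
    have hA' : ∫ z, hfun v t z.1 ∂K = A := by
      rw [hA, ← aux_emp_integral N ξ (hfun v t), ← h1,
        integral_map measurable_fst.aemeasurable (aux_h_cont v t).aestronglyMeasurable]
    rw [← h2, integral_map measurable_snd.aemeasurable (aux_h_cont v t).aestronglyMeasurable]
    calc ∫ z, hfun v t z.2 ∂K ≤ ∫ z, (hfun v t z.1 + L * _root_.lpNorm p (z.1 - z.2)) ∂K := by
          refine integral_mono_of_nonneg (Eventually.of_forall fun z => le_max_right _ _)
            (hh1.add (hi.const_mul L)) (Eventually.of_forall fun z => ?_)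
          exact aux_h_lip p q hp hpq v t z.1 z.2
      _ = A + L * ∫ z, _root_.lpNorm p (z.1 - z.2) ∂K := by
          rw [integral_add hh1 (hi.const_mul L), hA', integral_const_mul]
      _ ≤ _ := by gcongr
  refine le_of_forall_pos_le_add fun η hη => ?_
  have := key (η / (L + 1)) (by positivity)
  have h3 : L * (η / (L + 1)) ≤ η := by
    rw [mul_div_assoc', div_le_iff₀ (by positivity)]; nlinarith
  nlinarith

theorem aux_lower {n : ℕ} (p : ℝ≥0∞) (hp : 1 ≤ p)
    (v : Fin n → ℝ) (t ε L : ℝ) (hε : 0 ≤ ε)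
    (N : ℕ) (hN : 1 ≤ N) (ξ : Fin N → Fin n → ℝ)
    (u : Fin n → ℝ) (hu : _root_.lpNorm p u ≤ 1) (huv : ip u v = L)
    (δ : ℝ) (hδ : 0 < δ) (hδ1 : δ ≤ 1) :
    ∃ μ : Measure (Fin n → ℝ), IsProbabilityMeasure μ ∧
      Integrable (fun x => _root_.lpNorm p x) μ ∧
      dW p (empirical N ξ) μ ≤ ENNReal.ofReal ε ∧
      (1 - δ) * ((1 / (N : ℝ)) * ∑ i, hfun v t (ξ i)) +
        δ * ((1 / (N : ℝ)) * ∑ i, (ip (ξ i) v - t)) + L * ε ≤ ∫ x, hfun v t x ∂μ := by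
  have hF := aux_emp_prob N hN ξ
  have hint := aux_emp_int N hN ξ
  have hintg := aux_emp_integral N ξ
  set F := empirical N ξ with hFdef
  set w : Fin n → ℝ := (ε / δ) • u with hw
  set a : ℝ≥0∞ := ENNReal.ofReal (1 - δ) with ha
  set b : ℝ≥0∞ := ENNReal.ofReal δ with hb
  have hab : a + b = 1 := by
    rw [ha, hb, ← ENNReal.ofReal_add (by linarith) hδ.le]; simp
  let f1 : (Fin n → ℝ) → (Fin n → ℝ) × (Fin n → ℝ) := fun x => (x, x)
  let f2 : (Fin n → ℝ) → (Fin n → ℝ) × (Fin n → ℝ) := fun x => (x, x + w)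
  have m1 : Measurable f1 := by fun_prop
  have m2 : Measurable f2 := by fun_prop
  have mw : Measurable (fun x : Fin n → ℝ => x + w) := by fun_prop
  let K : Measure ((Fin n → ℝ) × (Fin n → ℝ)) := a • F.map f1 + b • F.map f2
  have hfst : K.map Prod.fst = F := by
    simp only [K]
    rw [Measure.map_add _ _ measurable_fst, Measure.map_smul, Measure.map_smul,
      Measure.map_map measurable_fst m1, Measure.map_map measurable_fst m2]
    have e1 : (Prod.fst ∘ f1) = id := rfl
    have e2 : (Prod.fst ∘ f2) = id := rfl
    rw [e1, e2, Measure.map_id, ← add_smul, hab, one_smul]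
  have hsnd : K.map Prod.snd = a • F + b • F.map (fun x => x + w) := by
    simp only [K]
    rw [Measure.map_add _ _ measurable_snd, Measure.map_smul, Measure.map_smul,
      Measure.map_map measurable_snd m1, Measure.map_map measurable_snd m2]
    have e1 : (Prod.snd ∘ f1) = id := rfl
    have e2 : (Prod.snd ∘ f2) = fun x => x + w := rfl
    rw [e1, e2, Measure.map_id]
  have hKp : IsProbabilityMeasure K := by
    constructor
    have : K Set.univ = (K.map Prod.fst) Set.univ := by
      rw [Measure.map_apply measurable_fst MeasurableSet.univ, Set.preimage_univ]
    rw [this, hfst]; exact measure_univ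
  have hintμ : ∀ g : (Fin n → ℝ) → ℝ, Continuous g →
      Integrable g (a • F) ∧ Integrable g (b • F.map (fun x => x + w)) := by
    intro g hg
    refine ⟨(hint g).smul_measure ENNReal.ofReal_ne_top, ?_⟩
    refine Integrable.smul_measure ?_ ENNReal.ofReal_ne_top
    rw [integrable_map_measure hg.aestronglyMeasurable mw.aemeasurable]
    exact hint _
  refine ⟨a • F + b • F.map (fun x => x + w), ?_, ?_, ?_, ?_⟩
  · rw [← hsnd]
    exact Measure.isProbabilityMeasure_map measurable_snd.aemeasurable
  · exact (hintμ _ (aux_cont p hp)).1.add_measure (hintμ _ (aux_cont p hp)).2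
  · unfold dW
    refine (iInf_le_of_le K <| iInf_le_of_le hKp <| iInf_le_of_le hfst <|
      iInf_le_of_le hsnd le_rfl).trans ?_
    have hcm : Measurable fun z : (Fin n → ℝ) × (Fin n → ℝ) =>
        ENNReal.ofReal (_root_.lpNorm p (z.1 - z.2)) :=
      (((aux_cont p hp).comp (by fun_prop)).measurable).ennreal_ofReal
    have hz : _root_.lpNorm p (0 : Fin n → ℝ) = 0 := by
      have := aux_smul p hp 0 (0 : Fin n → ℝ)
      simpa using this
    have hwn : _root_.lpNorm p (-w) ≤ ε / δ := by
      have : -w = (-(ε / δ)) • u := by rw [hw, neg_smul]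
      rw [this, aux_smul p hp, abs_neg, abs_of_nonneg (by positivity)]
      exact mul_le_of_le_one_right (by positivity) hu
    simp only [K]
    rw [lintegral_add_measure, lintegral_smul_measure, lintegral_smul_measure,
      lintegral_map hcm m1, lintegral_map hcm m2]
    simp only [f1, f2, sub_self, hz, ENNReal.ofReal_zero, lintegral_zero, sub_add_cancel_left,
      lintegral_const, measure_univ, mul_one, smul_eq_mul, mul_zero, zero_add]
    rw [hb, ← ENNReal.ofReal_mul hδ.le]
    refine ENNReal.ofReal_le_ofReal ?_
    calc δ * _root_.lpNorm p (-w) ≤ δ * (ε / δ) := by gcongr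
      _ = ε := by field_simp
  · have hI := hintμ _ (aux_h_cont v t)
    rw [integral_add_measure hI.1 hI.2, integral_smul_measure, integral_smul_measure,
      integral_map mw.aemeasurable (aux_h_cont v t).aestronglyMeasurable, ha, hb,
      ENNReal.toReal_ofReal (by linarith), ENNReal.toReal_ofReal hδ.le,
      hintg (hfun v t), hintg (fun x => hfun v t (x + w)), smul_eq_mul, smul_eq_mul, add_assoc]
    have hN0 : (0 : ℝ) < N := by exact_mod_cast hN
    have hwv : ip w v = ε / δ * L := by rw [hw, aux_ip_smul, huv]
    have hs : ∑ i, (ip (ξ i) v - t) + N * (ε / δ * L) ≤ ∑ i, hfun v t (ξ i + w) := by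
      have : ∑ i : Fin N, (ip (ξ i) v - t) + N * (ε / δ * L)
          = ∑ i : Fin N, (ip (ξ i) v - t + ε / δ * L) := by
        rw [Finset.sum_add_distrib]; simp
      rw [this]
      refine Finset.sum_le_sum fun i _ => ?_
      refine le_trans (le_of_eq ?_) (le_max_left _ _)
      rw [aux_ip_add, hwv]; ring
    have h2 : δ * (1 / (N : ℝ) * (∑ i, (ip (ξ i) v - t) + N * (ε / δ * L))) ≤
        δ * (1 / (N : ℝ) * ∑ i, hfun v t (ξ i + w)) := by gcongr
    have h3 : δ * (1 / (N : ℝ) * (∑ i, (ip (ξ i) v - t) + N * (ε / δ * L))) =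
        δ * (1 / (N : ℝ) * ∑ i, (ip (ξ i) v - t)) + L * ε := by
      field_simp
    linarith

theorem aux_sup {n : ℕ} (hn : 1 ≤ n) (p q : ℝ≥0∞) (hp : 1 ≤ p) (hpq : 1 / p + 1 / q = 1)
    (v : Fin n → ℝ) (t ε : ℝ) (hε : 0 ≤ ε)
    (N : ℕ) (hN : 1 ≤ N) (ξ : Fin N → Fin n → ℝ) :
    sSup {r : ℝ | ∃ μ : Measure (Fin n → ℝ), IsProbabilityMeasure μ ∧
          Integrable (fun x => _root_.lpNorm p x) μ ∧
          dW p (empirical N ξ) μ ≤ ENNReal.ofReal ε ∧ r = ∫ x, hfun v t x ∂μ} =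
      (1 / (N : ℝ)) * ∑ i, hfun v t (ξ i) + _root_.lpNorm q v * ε := by
  obtain ⟨u, hu, huv⟩ := aux_attain hn p q hp hpq v
  have hL : 0 ≤ _root_.lpNorm q v := by
    have h1 := aux_h_lip p q hp hpq v 0 0 u
    by_contra hneg
    push Not at hneg
    unfold _root_.lpNorm at hneg
    split_ifs at hneg with h
    · exact absurd hneg (not_lt.2 (Real.iSup_nonneg fun i => abs_nonneg _))
    · exact absurd hneg (not_lt.2 (by positivity))
  have hlow := aux_lower p hp v t ε _ hε N hN ξ u hu huv
  set A := (1 / (N : ℝ)) * ∑ i, hfun v t (ξ i) with hA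
  set B := (1 / (N : ℝ)) * ∑ i, (ip (ξ i) v - t) with hB
  have hAB : B ≤ A := by
    rw [hA, hB]; gcongr with i; exact le_max_left _ _
  refine csSup_eq_of_forall_le_of_forall_lt_exists_gt ?_ ?_ ?_
  · obtain ⟨μ, h1, h2, h3, -⟩ := hlow 1 one_pos le_rfl
    exact ⟨_, μ, h1, h2, h3, rfl⟩
  · rintro r ⟨μ, h1, h2, h3, rfl⟩
    exact aux_upper p q hp hpq v t ε hε hL N hN ξ μ h3
  · intro r hr
    set d := A + _root_.lpNorm q v * ε - r with hd
    have hd0 : 0 < d := by rw [hd]; linarith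
    obtain ⟨μ, h1, h2, h3, h4⟩ := hlow (min 1 (d / (A - B + 1) / 2))
      (lt_min one_pos (by have : 0 < A - B + 1 := by linarith
                          positivity)) (min_le_left _ _)
    refine ⟨_, ⟨μ, h1, h2, h3, rfl⟩, lt_of_lt_of_le ?_ h4⟩
    have hp1 : 0 < A - B + 1 := by linarith
    set e := min 1 (d / (A - B + 1) / 2) with he
    have he1 : e ≤ d / (A - B + 1) / 2 := min_le_right _ _
    have he2 : e * (A - B) ≤ d / 2 := by
      calc e * (A - B) ≤ d / (A - B + 1) / 2 * (A - B + 1) := by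
            refine mul_le_mul he1 (by linarith) (by linarith) (by positivity)
        _ = d / 2 := by field_simp
    nlinarith

/-- Theorem 1, worst-case METT: the infimum over `t` of
`t + (1/α)·sup{∫ h(v,t,·) dμ : d_W(F_N,μ) ≤ ε}` equals the optimal value of the LP
minimizing `t + (1/α)((1/N)Σ s_i + λε)` subject to `⟨v,ξ̂ⁱ⟩ − t ≤ s_i`, `s_i ≥ 0`,
`‖v‖_q ≤ λ`. -/
theorem stmt7 (n : ℕ) (hn : 1 ≤ n) (p q : ℝ≥0∞) (hp : 1 ≤ p) (hpq : 1 / p + 1 / q = 1)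
    (v : Fin n → ℝ) (α : ℝ) (hα : 0 < α) (hα1 : α ≤ 1) (ε : ℝ) (hε : 0 ≤ ε)
    (N : ℕ) (hN : 1 ≤ N) (ξ : Fin N → Fin n → ℝ) :
    (⨅ t : ℝ, t + (1 / α) *
        sSup {r : ℝ | ∃ μ : Measure (Fin n → ℝ), IsProbabilityMeasure μ ∧
          Integrable (fun x => lpNorm p x) μ ∧
          dW p (empirical N ξ) μ ≤ ENNReal.ofReal ε ∧ r = ∫ x, hfun v t x ∂μ}) =
      sInf {y : ℝ | ∃ (t : ℝ) (s : Fin N → ℝ) (lam : ℝ),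
        (∀ i, ip v (ξ i) - t ≤ s i ∧ 0 ≤ s i) ∧ lpNorm q v ≤ lam ∧
        y = t + (1 / α) * ((1 / (N : ℝ)) * ∑ i, s i + lam * ε)} := by
  have hipc : ∀ x : Fin n → ℝ, ip v x = ip x v := fun x => by simp [ip, mul_comm]
  simp_rw [aux_sup hn p q hp hpq v _ ε hε N hN ξ]
  set g : ℝ → ℝ := fun t => t + 1 / α *
    (1 / (N : ℝ) * ∑ i, hfun v t (ξ i) + _root_.lpNorm q v * ε) with hg
  set S := {y : ℝ | ∃ (t : ℝ) (s : Fin N → ℝ) (lam : ℝ),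
        (∀ i, ip v (ξ i) - t ≤ s i ∧ 0 ≤ s i) ∧ _root_.lpNorm q v ≤ lam ∧
        y = t + (1 / α) * ((1 / (N : ℝ)) * ∑ i, s i + lam * ε)} with hS
  have hmem : ∀ t, g t ∈ S := fun t =>
    ⟨t, fun i => hfun v t (ξ i), _root_.lpNorm q v,
      fun i => ⟨by rw [hipc]; exact le_max_left _ _, le_max_right _ _⟩, le_rfl, rfl⟩
  have hle : ∀ y ∈ S, ∃ t, g t ≤ y := by
    rintro y ⟨t, s, lam, h1, h2, rfl⟩
    refine ⟨t, ?_⟩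
    simp only [hg]
    gcongr with i
    exact max_le (by rw [← hipc]; exact (h1 i).1) (h1 i).2
  change sInf (Set.range g) = sInf S
  by_cases hb : BddBelow S
  · have hb' : BddBelow (Set.range g) := hb.mono (by rintro _ ⟨t, rfl⟩; exact hmem t)
    refine le_antisymm (le_csInf ⟨_, hmem 0⟩ fun y hy => ?_)
      (le_csInf ⟨_, 0, rfl⟩ ?_)
    · obtain ⟨t, ht⟩ := hle y hy
      exact (csInf_le hb' ⟨t, rfl⟩).trans ht
    · rintro _ ⟨t, rfl⟩
      exact csInf_le hb (hmem t)
  · have hb' : ¬ BddBelow (Set.range g) := by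
      rintro ⟨m, hm⟩
      refine hb ⟨m, fun y hy => ?_⟩
      obtain ⟨t, ht⟩ := hle y hy
      exact (hm ⟨t, rfl⟩).trans ht
    rw [Real.sInf_of_not_bddBelow hb, Real.sInf_of_not_bddBelow hb']
end
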